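/- Let X be uniformly distributed on the unit simplex Δ^n = {x ∈ [0,∞)^n : ∑ x_i = 1}. Then the variance of the maximum coordinate satisfies n^2 · Var(max_i X_i) = (n H_2(n) - H_1(n)^2) / (n+1), where H_k(n) = ∑_{i=1}^n i^{-k}. -/

import Mathlib

open MeasureTheory ProbabilityTheory

/-- The uniform probability distribution on the unit simplex
`Δ^n = {x ∈ [0,∞)^n : x_1 + ... + x_n = 1}`, i.e. normalized `(n-1)`-dimensional
Hausdorff (surface) measure on the simplex; equivalently `Dirichlet(1,...,1)`. -/
noncomputable def simplexUniform (n : ℕ) : Measure (Fin n → ℝ) :=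
  (μH[(n : ℝ) - 1] {x : Fin n → ℝ | (∀ i, 0 ≤ x i) ∧ ∑ i, x i = 1})⁻¹ •
    (μH[(n : ℝ) - 1]).restrict {x : Fin n → ℝ | (∀ i, 0 ≤ x i) ∧ ∑ i, x i = 1}

/-!
Let `E` be a vector of `n` independent exponential variables of rate `r`. Its density
`r ^ n * exp (-(r * ∑ i, x i))` depends on `∑ i, x i` only, so integrating along the rays that meet
the simplex gives `E = S • X` with `X` uniform on the simplex and `S` independent of `X` and
Gamma`(n, r)`-distributed. The maximum is homogeneous of degree one, so the `k`-th moments satisfy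
`𝔼[S ^ k] * 𝔼[(max X) ^ k] = 𝔼[(max E) ^ k]`. By Rényi's representation, `max E` is distributed as
a sum of independent exponential variables of rates `r, 2 * r, …, n * r`, whose mean and variance
for `r = 1` are `H₁(n)` and `H₂(n)`.
-/

open Set Module
open scoped ENNReal Nat

section HyperplaneSlices

variable {E : Type*} [NormedAddCommGroup E] [NormedSpace ℝ E] [MeasurableSpace E] [BorelSpace E]

theorem lintegral_eq_ofReal_mul_lintegral_comp_smul [FiniteDimensional ℝ E] (μ : Measure E)
    [μ.IsAddHaarMeasure] {s : ℝ} (hs : s ≠ 0) (F : E → ℝ≥0∞) :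
    ∫⁻ x, F x ∂μ = ENNReal.ofReal (|s| ^ finrank ℝ E) * ∫⁻ x, F (s • x) ∂μ := by
  have hs' : 0 < |s| ^ finrank ℝ E := by positivity
  have lintegral_map : ∫⁻ x, F x ∂(μ.map (s • ·)) = ∫⁻ x, F (s • x) ∂μ :=
    (Homeomorph.smulOfNeZero s hs).measurableEmbedding.lintegral_map F
  rw [← lintegral_map, Measure.map_addHaar_smul μ hs, lintegral_smul_measure,
    smul_eq_mul, ← mul_assoc, ← ENNReal.ofReal_mul hs'.le, abs_inv, abs_pow,
    mul_inv_cancel₀ hs'.ne', ENNReal.ofReal_one, one_mul]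

theorem setLIntegral_hausdorffMeasure_hyperplane (ℓ : E →L[ℝ] ℝ) (v : E) {d : ℝ} (hd : 0 ≤ d)
    (F : E → ℝ≥0∞) :
    ∫⁻ x in {x | ℓ x = ℓ v}, F x ∂μH[d] = ∫⁻ w : ℓ.ker, F (v + w) ∂μH[d] := by
  have isometry : Isometry fun w : ℓ.ker ↦ v + (w : E) :=
    (isometry_add_left v).comp isometry_subtype_coe
  have range_eq : range (fun w : ℓ.ker ↦ v + (w : E)) = {x | ℓ x = ℓ v} := by
    ext x
    refine ⟨?_, fun hx ↦ ⟨⟨x - v, ?_⟩, add_sub_cancel v x⟩⟩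
    · rintro ⟨w, rfl⟩
      simp
    · simpa [sub_eq_zero] using hx
  have embedding : MeasurableEmbedding fun w : ℓ.ker ↦ v + (w : E) :=
    (measurableEmbedding_addLeft v).comp
      (.subtype_coe (by exact ℓ.isClosed_ker.measurableSet))
  rw [← range_eq, ← isometry.map_hausdorffMeasure (Or.inl hd), embedding.lintegral_map]

theorem exists_lintegral_eq_lintegral_lintegral_ker [FiniteDimensional ℝ E] (μ : Measure E)
    [μ.IsAddHaarMeasure] (ℓ : E →L[ℝ] ℝ) {v : E} (hv : ℓ v = 1) :
    ∃ c : ℝ≥0∞, ∀ F : E → ℝ≥0∞, Measurable F →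
      ∫⁻ x, F x ∂μ = c * ∫⁻ s : ℝ, ∫⁻ w : ℓ.ker, F (s • v + w) ∂μH[finrank ℝ ℓ.ker] := by
  let e : E ≃L[ℝ] ℝ × ℓ.ker := .equivOfRightInverse ℓ (.toSpanSingleton ℝ v) fun s ↦ by simp [hv]
  let ν : Measure E := ((volume : Measure ℝ).prod μH[finrank ℝ ℓ.ker]).map e.symm
  have : ν.IsAddHaarMeasure := e.symm.isAddHaarMeasure_map _
  refine ⟨μ.addHaarScalarFactor ν, fun F hF ↦ ?_⟩
  have hμ : μ = (μ.addHaarScalarFactor ν : ℝ≥0∞) • ν := Measure.isAddLeftInvariant_eq_smul μ ν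
  have hFe : Measurable fun p ↦ F (e.symm p) := hF.comp e.symm.continuous.measurable
  conv_lhs => rw [hμ]
  rw [lintegral_smul_measure, smul_eq_mul, lintegral_map hF e.symm.continuous.measurable,
    lintegral_prod _ hFe.aemeasurable]
  simp [e]

-- On the slice `ℓ = s`, replacing `w` by `s • w` costs a factor `|s| ^ d` and turns `F (s • v + w)`
-- into `F (s • (v + w))`.
theorem exists_lintegral_eq_lintegral_lintegral_smul_hyperplane [FiniteDimensional ℝ E]
    (μ : Measure E) [μ.IsAddHaarMeasure] {ℓ : E →L[ℝ] ℝ} (hℓ : ℓ ≠ 0) {d : ℕ}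
    (hd : finrank ℝ E = d + 1) :
    ∃ c : ℝ≥0∞, ∀ F : E → ℝ≥0∞, Measurable F →
      ∫⁻ x, F x ∂μ =
        c * ∫⁻ s : ℝ, ENNReal.ofReal (|s| ^ d) * ∫⁻ x in {x | ℓ x = 1}, F (s • x) ∂μH[d] := by
  obtain ⟨u, hu⟩ : ∃ u, ℓ u ≠ 0 := by simpa using DFunLike.ne_iff.mp hℓ
  obtain ⟨v, hv⟩ : ∃ v, ℓ v = 1 := ⟨(ℓ u)⁻¹ • u, by simp [hu]⟩
  have finrank_ker : finrank ℝ ℓ.ker = d := by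
    have := Module.Dual.finrank_ker_add_one_of_ne_zero 
      (f := (ℓ : E →ₗ[ℝ] ℝ)) fun h ↦ hℓ (ContinuousLinearMap.coe_injective h)
    lia
  obtain ⟨c, hc⟩ := exists_lintegral_eq_lintegral_lintegral_ker μ ℓ hv
  refine ⟨c, fun F hF ↦ ?_⟩
  rw [hc F hF]
  congr 1
  refine lintegral_congr_ae ?_
  filter_upwards [compl_mem_ae_iff.mpr (measure_singleton (0 : ℝ))] with s hs
  rw [← hv, setLIntegral_hausdorffMeasure_hyperplane ℓ v (Nat.cast_nonneg d),
    lintegral_eq_ofReal_mul_lintegral_comp_smul _ hs, finrank_ker]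
  simp only [smul_add, Submodule.coe_smul]

end HyperplaneSlices

section ProductDensity

theorem lintegral_fin_prod_eq_prod {n : ℕ} {X : Fin n → Type*} [∀ i, MeasurableSpace (X i)]
    {μ : (i : Fin n) → Measure (X i)} [∀ i, SigmaFinite (μ i)] {f : (i : Fin n) → X i → ℝ≥0∞}
    (hf : ∀ i, Measurable (f i)) :
    ∫⁻ x, ∏ i, f i (x i) ∂Measure.pi μ = ∏ i, ∫⁻ x, f i x ∂μ i := by
  induction n with
  | zero => simp
  | succ n ih =>
    have hf_tail : Measurable fun x : (i : Fin n) → X i.succ ↦ ∏ i, f i.succ (x i) :=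
      Finset.measurable_prod _ fun i _ ↦ (hf i.succ).comp (measurable_pi_apply i)
    calc ∫⁻ x, ∏ i, f i (x i) ∂Measure.pi μ
      _ = ∫⁻ x : X 0 × ((i : Fin n) → X i.succ), f 0 x.1 * ∏ i : Fin n, f i.succ (x.2 i)
            ∂(μ 0).prod (Measure.pi fun i ↦ μ i.succ) := by
        refine ((measurePreserving_piFinSuccAbove μ 0).symm.lintegral_comp_emb
          (MeasurableEquiv.measurableEmbedding _) _).symm.trans (lintegral_congr fun p ↦ ?_)
        exact Fin.prod_univ_succ _
      _ = ∏ i, ∫⁻ x, f i x ∂μ i := by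
        rw [lintegral_prod_mul (hf 0).aemeasurable hf_tail.aemeasurable,
          ih fun i ↦ hf i.succ, Fin.prod_univ_succ]

theorem lintegral_fintype_prod_eq_prod {ι : Type*} [Fintype ι] {X : ι → Type*}
    [∀ i, MeasurableSpace (X i)] {μ : (i : ι) → Measure (X i)} [∀ i, SigmaFinite (μ i)]
    {f : (i : ι) → X i → ℝ≥0∞} (hf : ∀ i, Measurable (f i)) :
    ∫⁻ x, ∏ i, f i (x i) ∂Measure.pi μ = ∏ i, ∫⁻ x, f i x ∂μ i := by
  let e := (Fintype.equivFin ι).symm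
  rw [← (measurePreserving_piCongrLeft _ e).lintegral_comp_emb
    (MeasurableEquiv.measurableEmbedding _)]
  simp_rw [← e.prod_comp, MeasurableEquiv.coe_piCongrLeft, Equiv.piCongrLeft_apply_apply]
  exact lintegral_fin_prod_eq_prod fun i ↦ hf (e i)

theorem pi_withDensity {ι : Type*} [Fintype ι] {X : ι → Type*} [∀ i, MeasurableSpace (X i)]
    (μ : (i : ι) → Measure (X i)) [∀ i, SigmaFinite (μ i)] {f : (i : ι) → X i → ℝ≥0∞}
    (hf : ∀ i, Measurable (f i)) [∀ i, SigmaFinite ((μ i).withDensity (f i))] :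
    Measure.pi (fun i ↦ (μ i).withDensity (f i)) =
      (Measure.pi μ).withDensity fun x ↦ ∏ i, f i (x i) := by
  refine Measure.pi_eq fun s hs ↦ ?_
  rw [withDensity_apply _ (MeasurableSet.univ_pi hs), Measure.restrict_pi_pi,
    lintegral_fintype_prod_eq_prod hf]
  simp only [withDensity_apply _ (hs _)]

end ProductDensity

section GammaMoments

variable {a r : ℝ}

theorem measurable_gammaPDF (a r : ℝ) : Measurable (gammaPDF a r) :=
  (measurable_gammaPDFReal a r).ennreal_ofReal

theorem lintegral_gammaMeasure (a r : ℝ) (f : ℝ → ℝ≥0∞) :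
    ∫⁻ x, f x ∂gammaMeasure a r = ∫⁻ x, gammaPDF a r x * f x :=
  lintegral_withDensity_eq_lintegral_mul_non_measurable _ (measurable_gammaPDF a r)
    (ae_of_all _ fun _ ↦ ENNReal.ofReal_lt_top) f

theorem ae_nonneg_gammaMeasure (a r : ℝ) : ∀ᵐ x ∂gammaMeasure a r, 0 ≤ x := by
  rw [gammaMeasure, ae_withDensity_iff (measurable_gammaPDF a r)]
  exact ae_of_all _ fun x hx ↦ le_of_not_gt fun h ↦ hx (gammaPDF_of_neg h)

theorem integral_pow_gammaMeasure (ha : 0 < a) (hr : 0 < r) (k : ℕ) :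
    ∫ x, x ^ k ∂gammaMeasure a r = Real.Gamma (a + k) / (Real.Gamma a * r ^ k) := by
  have integrand_eq : ∀ x, (gammaPDF a r x).toReal • x ^ k =
      (Ici (0 : ℝ)).indicator
        (fun x ↦ r ^ a / Real.Gamma a * x ^ (a - 1) * Real.exp (-(r * x)) * x ^ k) x := by
    intro x
    rw [gammaPDF, ENNReal.toReal_ofReal (gammaPDFReal_nonneg ha hr x), gammaPDFReal, smul_eq_mul]
    by_cases hx : 0 ≤ x <;> simp [hx]
  have hak : 0 < a + k := by positivity
  calc ∫ x, x ^ k ∂gammaMeasure a r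
    _ = ∫ x, (gammaPDF a r x).toReal • x ^ k :=
      integral_withDensity_eq_integral_toReal_smul
        (measurable_gammaPDF a r) (ae_of_all _ fun _ ↦ ENNReal.ofReal_lt_top) _
    _ = ∫ x in Ioi 0, r ^ a / Real.Gamma a * (x ^ (a + k - 1) * Real.exp (-(r * x))) := by
      simp_rw [integrand_eq]
      rw [integral_indicator measurableSet_Ici, integral_Ici_eq_integral_Ioi]
      refine setIntegral_congr_fun measurableSet_Ioi fun x hx ↦ ?_
      rw [add_sub_right_comm, Real.rpow_add hx, Real.rpow_natCast]
      ring
    _ = Real.Gamma (a + k) / (Real.Gamma a * r ^ k) := by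
      rw [integral_const_mul, Real.integral_rpow_mul_exp_neg_mul_Ioi hak hr, one_div,
        Real.inv_rpow hr.le, Real.rpow_add hr, Real.rpow_natCast]
      field

theorem integrable_pow_gammaMeasure (ha : 0 < a) (hr : 0 < r) (k : ℕ) :
    Integrable (fun x ↦ x ^ k) (gammaMeasure a r) := by
  refine .of_integral_ne_zero ?_
  rw [integral_pow_gammaMeasure ha hr]
  have := Real.Gamma_pos_of_pos ha
  have := Real.Gamma_pos_of_pos (show 0 < a + k by positivity)
  positivity

theorem integral_id_gammaMeasure (ha : 0 < a) (hr : 0 < r) :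
    ∫ x, x ∂gammaMeasure a r = a / r := by
  have := Real.Gamma_pos_of_pos ha
  simpa [Real.Gamma_add_one ha.ne', mul_comm a, mul_div_mul_left _ _ this.ne'] using
    integral_pow_gammaMeasure ha hr 1

theorem integral_sq_gammaMeasure (ha : 0 < a) (hr : 0 < r) :
    ∫ x, x ^ 2 ∂gammaMeasure a r = a * (a + 1) / r ^ 2 := by
  have := Real.Gamma_pos_of_pos ha
  rw [integral_pow_gammaMeasure ha hr, Nat.cast_two, ← one_add_one_eq_two, ← add_assoc,
    Real.Gamma_add_one (by positivity), Real.Gamma_add_one ha.ne']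
  field

theorem memLp_id_gammaMeasure (ha : 0 < a) (hr : 0 < r) : MemLp id 2 (gammaMeasure a r) :=
  (memLp_two_iff_integrable_sq aestronglyMeasurable_id).2 (integrable_pow_gammaMeasure ha hr 2)

theorem variance_id_gammaMeasure (ha : 0 < a) (hr : 0 < r) :
    Var[id; gammaMeasure a r] = a / r ^ 2 := by
  have := isProbabilityMeasure_gammaMeasure ha hr
  rw [variance_eq_sub (memLp_id_gammaMeasure ha hr)]
  simp only [Pi.pow_apply, id, integral_sq_gammaMeasure ha hr, integral_id_gammaMeasure ha hr]
  field

theorem memLp_id_expMeasure (hr : 0 < r) : MemLp id 2 (expMeasure r) :=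
  memLp_id_gammaMeasure one_pos hr

theorem integral_id_expMeasure (hr : 0 < r) : ∫ x, x ∂expMeasure r = 1 / r :=
  integral_id_gammaMeasure one_pos hr

theorem variance_id_expMeasure (hr : 0 < r) : Var[id; expMeasure r] = 1 / r ^ 2 :=
  variance_id_gammaMeasure one_pos hr

end GammaMoments

section GammaDirichlet

theorem ofReal_abs_pow_mul_prod_exponentialPDF {m : ℕ} {r s : ℝ} (hr : 0 < r) (hs : s ≠ 0)
    {x : Fin (m + 1) → ℝ} (hx : ∑ i, x i = 1) :
    ENNReal.ofReal (|s| ^ m) * ∏ i, exponentialPDF r (s * x i) =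
      m ! * gammaPDF (m + 1) r s * (stdSimplex ℝ (Fin (m + 1))).indicator 1 x := by
  have prod_eq_zero (i) (hi : s * x i < 0) : ∏ i, exponentialPDF r (s * x i) = 0 :=
    Finset.prod_eq_zero (Finset.mem_univ i) (exponentialPDF_of_neg hi)
  rcases hs.lt_or_gt with hs | hs
  · obtain ⟨i, -, hi⟩ : ∃ i ∈ Finset.univ, (0 : ℝ) < x i :=
      Finset.exists_lt_of_sum_lt (by simp [hx])
    rw [gammaPDF_of_neg hs, prod_eq_zero i (mul_neg_of_neg_of_pos hs hi)]
    simp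
  by_cases hx_nonneg : ∀ i, 0 ≤ x i
  · have pdf_eq (i) : exponentialPDF r (s * x i) =
        ENNReal.ofReal (r * Real.exp (-(r * s) * x i)) := by
      rw [exponentialPDF_of_nonneg (mul_nonneg hs.le (hx_nonneg i)), neg_mul, mul_assoc]
    have prod_eq : ∏ i, r * Real.exp (-(r * s) * x i) = r ^ (m + 1) * Real.exp (-(r * s)) := by
      rw [Finset.prod_mul_distrib, ← Real.exp_sum, ← Finset.mul_sum, hx]
      simp
    have hx_mem : x ∈ stdSimplex ℝ (Fin (m + 1)) := ⟨hx_nonneg, hx⟩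
    rw [indicator_of_mem hx_mem, gammaPDF_of_nonneg hs.le, Pi.one_apply, mul_one,
      ← ENNReal.ofReal_natCast, ← ENNReal.ofReal_mul (by positivity)]
    simp_rw [pdf_eq]
    rw [← ENNReal.ofReal_prod_of_nonneg fun i _ ↦ by positivity, prod_eq,
      ← ENNReal.ofReal_mul (by positivity), abs_of_pos hs, Real.Gamma_nat_eq_factorial,
      add_sub_cancel_right, Real.rpow_natCast, ← Nat.cast_succ, Real.rpow_natCast]
    congr 1
    field
  · rw [indicator_of_notMem fun h ↦ hx_nonneg h.1, mul_zero]
    push Not at hx_nonneg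
    obtain ⟨i, hi⟩ := hx_nonneg
    rw [prod_eq_zero i (mul_neg_of_pos_of_neg hs hi), mul_zero]

theorem pi_expMeasure {ι : Type*} [Fintype ι] {r : ℝ} (hr : 0 < r) :
    Measure.pi (fun _ : ι ↦ expMeasure r) =
      volume.withDensity fun x ↦ ∏ i, exponentialPDF r (x i) := by
  have : IsProbabilityMeasure (volume.withDensity (exponentialPDF r)) :=
    isProbabilityMeasure_expMeasure hr
  exact pi_withDensity _ (f := fun _ ↦ exponentialPDF r) fun _ ↦ measurable_gammaPDF 1 r

theorem ofReal_abs_pow_mul_setLIntegral_prod_exponentialPDF {m : ℕ} {r s : ℝ} (hr : 0 < r)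
    (hs : s ≠ 0) (μ : Measure (Fin (m + 1) → ℝ)) (G : (Fin (m + 1) → ℝ) → ℝ≥0∞) :
    ENNReal.ofReal (|s| ^ m) *
        ∫⁻ x in {x | ∑ i, x i = 1}, (∏ i, exponentialPDF r (s * x i)) * G x ∂μ =
      m ! * (gammaPDF (m + 1) r s * ∫⁻ x in stdSimplex ℝ (Fin (m + 1)), G x ∂μ) := by
  have measurableSet_slice : MeasurableSet {x : Fin (m + 1) → ℝ | ∑ i, x i = 1} :=
    measurableSet_eq_fun (by fun_prop) measurable_const
  have measurableSet_stdSimplex : MeasurableSet (stdSimplex ℝ (Fin (m + 1))) :=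
    (isClosed_stdSimplex ℝ (Fin (m + 1))).measurableSet
  have coeff_ne_top : m ! * gammaPDF (m + 1) r s ≠ ∞ :=
    ENNReal.mul_ne_top (ENNReal.natCast_ne_top _) ENNReal.ofReal_ne_top
  rw [← lintegral_const_mul' _ _ ENNReal.ofReal_ne_top, ← mul_assoc,
    ← lintegral_const_mul' _ _ coeff_ne_top]
  calc ∫⁻ x in {x | ∑ i, x i = 1},
        ENNReal.ofReal (|s| ^ m) * ((∏ i, exponentialPDF r (s * x i)) * G x) ∂μ
    _ = ∫⁻ x in {x | ∑ i, x i = 1}, (stdSimplex ℝ (Fin (m + 1))).indicator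
          (fun x ↦ m ! * gammaPDF (m + 1) r s * G x) x ∂μ := by
      refine setLIntegral_congr_fun measurableSet_slice fun x hx ↦ ?_
      rw [← mul_assoc, ofReal_abs_pow_mul_prod_exponentialPDF hr hs hx]
      by_cases h : x ∈ stdSimplex ℝ (Fin (m + 1)) <;> simp [h]
    _ = ∫⁻ x in stdSimplex ℝ (Fin (m + 1)), m ! * gammaPDF (m + 1) r s * G x ∂μ := by
      rw [setLIntegral_indicator measurableSet_stdSimplex,
        inter_eq_left.mpr (show stdSimplex ℝ _ ⊆ {x | ∑ i, x i = 1} from fun x hx ↦ hx.2)]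

theorem exists_lintegral_pi_expMeasure_eq {r : ℝ} (hr : 0 < r) (m : ℕ) :
    ∃ c : ℝ≥0∞, ∀ F : (Fin (m + 1) → ℝ) → ℝ≥0∞, Measurable F →
      ∫⁻ x, F x ∂Measure.pi (fun _ ↦ expMeasure r) =
        c * ∫⁻ s, ∫⁻ x in stdSimplex ℝ (Fin (m + 1)), F (s • x) ∂μH[m]
          ∂gammaMeasure (m + 1) r := by
  let ℓ : (Fin (m + 1) → ℝ) →L[ℝ] ℝ := ∑ i, .proj i
  have ℓ_apply (x) : ℓ x = ∑ i, x i := by simp [ℓ]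
  have ℓ_ne_zero : ℓ ≠ 0 := fun h ↦ by simpa [ℓ_apply] using DFunLike.congr_fun h (Pi.single 0 1)
  obtain ⟨c, hc⟩ := exists_lintegral_eq_lintegral_lintegral_smul_hyperplane
    (volume : Measure (Fin (m + 1) → ℝ)) ℓ_ne_zero (d := m) (by simp)
  simp only [ℓ_apply] at hc
  refine ⟨c * m !, fun F hF ↦ ?_⟩
  have measurable_exponentialPDF : Measurable (exponentialPDF r) := measurable_gammaPDF 1 r
  rw [pi_expMeasure hr, lintegral_withDensity_eq_lintegral_mul _ (by fun_prop) hF,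
    hc _ (by fun_prop), lintegral_gammaMeasure, mul_assoc,
    ← lintegral_const_mul' (m ! : ℝ≥0∞) _ (ENNReal.natCast_ne_top _)]
  congr 1
  refine lintegral_congr_ae ?_
  filter_upwards [compl_mem_ae_iff.mpr (measure_singleton (0 : ℝ))] with s hs
  exact ofReal_abs_pow_mul_setLIntegral_prod_exponentialPDF hr hs _ _

theorem lintegral_pi_expMeasure {r : ℝ} (hr : 0 < r) (m : ℕ) {F : (Fin (m + 1) → ℝ) → ℝ≥0∞}
    (hF : Measurable F) :
    ∫⁻ x, F x ∂Measure.pi (fun _ ↦ expMeasure r) =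
      (μH[m] (stdSimplex ℝ (Fin (m + 1))))⁻¹ *
        ∫⁻ s, ∫⁻ x in stdSimplex ℝ (Fin (m + 1)), F (s • x) ∂μH[m] ∂gammaMeasure (m + 1) r := by
  have := isProbabilityMeasure_expMeasure hr
  have := isProbabilityMeasure_gammaMeasure (a := m + 1) (by positivity) hr
  obtain ⟨c, hc⟩ := exists_lintegral_pi_expMeasure_eq hr m
  have hc_eq : c = (μH[m] (stdSimplex ℝ (Fin (m + 1))))⁻¹ :=
    ENNReal.eq_inv_of_mul_eq_one_left (by simpa using (hc 1 measurable_one).symm)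
  rw [hc F hF, hc_eq]

theorem hausdorffMeasure_stdSimplex_ne_zero_and_ne_top (m : ℕ) :
    μH[m] (stdSimplex ℝ (Fin (m + 1))) ≠ 0 ∧ μH[m] (stdSimplex ℝ (Fin (m + 1))) ≠ ∞ := by
  have := isProbabilityMeasure_expMeasure one_pos
  have := isProbabilityMeasure_gammaMeasure (a := m + 1) (by positivity) one_pos
  have total_mass : 1 =
      (μH[m] (stdSimplex ℝ (Fin (m + 1))))⁻¹ * μH[m] (stdSimplex ℝ (Fin (m + 1))) := by
    simpa using lintegral_pi_expMeasure one_pos m measurable_one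
  constructor <;> intro h <;> simp [h] at total_mass

theorem simplexUniform_succ (m : ℕ) :
    simplexUniform (m + 1) =
      (μH[m] (stdSimplex ℝ (Fin (m + 1))))⁻¹ • μH[m].restrict (stdSimplex ℝ (Fin (m + 1))) := by
  simp only [simplexUniform, Nat.cast_succ, add_sub_cancel_right]
  rfl

theorem isProbabilityMeasure_simplexUniform {n : ℕ} (hn : 0 < n) :
    IsProbabilityMeasure (simplexUniform n) := by
  obtain ⟨m, rfl⟩ := Nat.exists_eq_add_one.mpr hn
  obtain ⟨h_zero, h_top⟩ := hausdorffMeasure_stdSimplex_ne_zero_and_ne_top m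
  rw [simplexUniform_succ]
  exact cond_isProbabilityMeasure_of_finite h_zero h_top

theorem map_smul_gammaMeasure_prod_simplexUniform {n : ℕ} (hn : 0 < n) {r : ℝ} (hr : 0 < r) :
    ((gammaMeasure n r).prod (simplexUniform n)).map (fun p ↦ p.1 • p.2) =
      Measure.pi fun _ : Fin n ↦ expMeasure r := by
  have := isProbabilityMeasure_simplexUniform hn
  obtain ⟨m, rfl⟩ := Nat.exists_eq_add_one.mpr hn
  have measure_ne_zero := (hausdorffMeasure_stdSimplex_ne_zero_and_ne_top m).1
  refine Measure.ext_of_lintegral _ fun F hF ↦ ?_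
  rw [lintegral_pi_expMeasure hr m hF, lintegral_map hF (by fun_prop),
    lintegral_prod _ (by fun_prop), simplexUniform_succ]
  simp only [lintegral_smul_measure, smul_eq_mul]
  rw [lintegral_const_mul' _ _ (ENNReal.inv_ne_top.mpr measure_ne_zero), Nat.cast_succ]

theorem integral_pi_expMeasure_of_homogeneous {n : ℕ} (hn : 0 < n) {r : ℝ} (hr : 0 < r) {k : ℕ}
    {f : (Fin n → ℝ) → ℝ} (hf : Measurable f)
    (hf_smul : ∀ s : ℝ, 0 ≤ s → ∀ x, f (s • x) = s ^ k * f x) :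
    ∫ x, f x ∂Measure.pi (fun _ ↦ expMeasure r) =
      (∫ s, s ^ k ∂gammaMeasure n r) * ∫ x, f x ∂simplexUniform n := by
  have := isProbabilityMeasure_simplexUniform hn
  have := isProbabilityMeasure_gammaMeasure (a := n) (by positivity) hr
  rw [← map_smul_gammaMeasure_prod_simplexUniform hn hr,
    integral_map (by fun_prop) hf.aestronglyMeasurable, ← integral_prod_mul]
  refine integral_congr_ae ?_
  have : ∀ᵐ p ∂(gammaMeasure n r).prod (simplexUniform n), 0 ≤ p.1 :=
    Measure.quasiMeasurePreserving_fst.ae (ae_nonneg_gammaMeasure n r)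
  filter_upwards [this] with p hp
  exact hf_smul _ hp _

end GammaDirichlet

section Convolution

variable {μ ν : Measure ℝ}

theorem conv_Iic [SFinite ν] (t : ℝ) : (μ ∗ ν) (Iic t) = ∫⁻ x, ν (Iic (t - x)) ∂μ := by
  rw [← lintegral_indicator_one measurableSet_Iic,
    Measure.lintegral_conv (measurable_one.indicator measurableSet_Iic)]
  refine lintegral_congr fun x ↦ ?_
  rw [← lintegral_indicator_one measurableSet_Iic]
  simp [indicator, le_sub_iff_add_le']

theorem memLp_id_conv [IsFiniteMeasure μ] [IsFiniteMeasure ν] {p : ℝ≥0∞} (hμ : MemLp id p μ)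
    (hν : MemLp id p ν) : MemLp id p (μ ∗ ν) := by
  rw [Measure.conv, memLp_map_measure_iff aestronglyMeasurable_id (by fun_prop)]
  exact (hμ.comp_fst ν).add (hν.comp_snd μ)

variable [IsProbabilityMeasure μ] [IsProbabilityMeasure ν]

theorem integral_id_conv (hμ : Integrable id μ) (hν : Integrable id ν) :
    ∫ x, x ∂(μ ∗ ν) = ∫ x, x ∂μ + ∫ x, x ∂ν := by
  rw [Measure.conv, integral_map (f := fun x ↦ x) (by fun_prop) aestronglyMeasurable_id]
  calc ∫ p, p.1 + p.2 ∂μ.prod ν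
    _ = ∫ p, p.1 ∂μ.prod ν + ∫ p, p.2 ∂μ.prod ν :=
      integral_add (hμ.comp_fst ν) (hν.comp_snd μ)
    _ = ∫ x, x ∂μ + ∫ x, x ∂ν := by
      simp [integral_fun_fst fun x : ℝ ↦ x, integral_fun_snd fun x : ℝ ↦ x]

theorem variance_id_conv (hμ : MemLp id 2 μ) (hν : MemLp id 2 ν) :
    Var[id; μ ∗ ν] = Var[id; μ] + Var[id; ν] := by
  rw [Measure.conv, variance_id_map (by fun_prop)]
  exact variance_add_prod (X := id) (Y := id) hμ hν

end Convolution

section ExponentialMaximum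

/-- The law of the maximum of `n` independent exponential variables of rate `r`. For `n = 0` the
empty supremum makes it the Dirac mass at `0`. -/
noncomputable def expMaxMeasure (r : ℝ) (n : ℕ) : Measure ℝ :=
  (Measure.pi fun _ : Fin n ↦ expMeasure r).map fun x ↦ ⨆ i, x i

variable {r : ℝ}

theorem measurable_iSup_apply {ι : Type*} [Countable ι] : Measurable fun x : ι → ℝ ↦ ⨆ i, x i :=
  .iSup fun i ↦ measurable_pi_apply i

theorem isProbabilityMeasure_expMaxMeasure (hr : 0 < r) (n : ℕ) :
    IsProbabilityMeasure (expMaxMeasure r n) := by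
  have := isProbabilityMeasure_expMeasure hr
  exact Measure.isProbabilityMeasure_map measurable_iSup_apply.aemeasurable

theorem expMaxMeasure_zero (r : ℝ) : expMaxMeasure r 0 = Measure.dirac 0 := by
  simp [expMaxMeasure]

theorem expMeasure_Iic (hr : 0 < r) (t : ℝ) :
    expMeasure r (Iic t) = ENNReal.ofReal (if 0 ≤ t then 1 - Real.exp (-(r * t)) else 0) := by
  have := isProbabilityMeasure_expMeasure hr
  rw [← ofReal_cdf, cdf_expMeasure_eq hr]

theorem expMaxMeasure_Iic_of_neg (hr : 0 < r) (n : ℕ) {t : ℝ} (ht : t < 0) :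
    expMaxMeasure r n (Iic t) = 0 := by
  have := isProbabilityMeasure_expMeasure hr
  rw [expMaxMeasure, Measure.map_apply measurable_iSup_apply measurableSet_Iic]
  have ae_nonneg : ∀ᵐ x ∂Measure.pi fun _ : Fin n ↦ expMeasure r, ∀ i, 0 ≤ x i :=
    ae_all_iff.2 fun i ↦ Measure.tendsto_eval_ae_ae (ae_nonneg_gammaMeasure 1 r)
  refine measure_eq_zero_iff_ae_notMem.2 ?_
  filter_upwards [ae_nonneg] with x hx
  exact fun h ↦ (ht.trans_le (Real.iSup_nonneg hx)).not_ge h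

theorem expMaxMeasure_Iic_of_nonneg (hr : 0 < r) (n : ℕ) {t : ℝ} (ht : 0 ≤ t) :
    expMaxMeasure r n (Iic t) = ENNReal.ofReal ((1 - Real.exp (-(r * t))) ^ n) := by
  have := isProbabilityMeasure_expMeasure hr
  have preimage_eq : (fun x : Fin n → ℝ ↦ ⨆ i, x i) ⁻¹' Iic t = univ.pi fun _ ↦ Iic t := by
    ext x
    simp only [mem_preimage, mem_Iic, mem_univ_pi]
    exact ⟨fun h i ↦ (le_ciSup (finite_range x).bddAbove i).trans h, fun h ↦ Real.iSup_le h ht⟩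
  have : Real.exp (-(r * t)) ≤ 1 := Real.exp_le_one_iff.mpr (neg_nonpos.mpr (by positivity))
  rw [expMaxMeasure, Measure.map_apply measurable_iSup_apply measurableSet_Iic, preimage_eq,
    Measure.pi_pi, Finset.prod_const, Finset.card_fin, expMeasure_Iic hr, if_pos ht,
    ENNReal.ofReal_pow (by linarith)]

-- The density is the derivative of `-(exp (-(r * x)) - exp (-(r * t))) ^ (n + 1)`.
theorem integral_exp_mul_one_sub_exp_pow (r : ℝ) (n : ℕ) (t : ℝ) :
    ∫ x in 0..t, (n + 1) * r * Real.exp (-((n + 1) * r * x)) *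
        (1 - Real.exp (-(r * (t - x)))) ^ n = (1 - Real.exp (-(r * t))) ^ (n + 1) := by
  have hasDerivAt_antideriv (x : ℝ) :
      HasDerivAt (fun x ↦ -(Real.exp (-(r * x)) - Real.exp (-(r * t))) ^ (n + 1))
        ((n + 1) * r * Real.exp (-((n + 1) * r * x)) * (1 - Real.exp (-(r * (t - x)))) ^ n) x := by
    have exp_split : Real.exp (-(r * x)) - Real.exp (-(r * t)) =
        Real.exp (-(r * x)) * (1 - Real.exp (-(r * (t - x)))) := by
      rw [mul_sub, mul_one, ← Real.exp_add]
      ring_nf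
    have exp_pow : Real.exp (-((n + 1) * r * x)) = Real.exp (-(r * x)) ^ (n + 1) := by
      rw [← Real.exp_nat_mul]
      push_cast
      ring_nf
    refine (((((hasDerivAt_id x).const_mul r).fun_neg.exp).sub_const
      (Real.exp (-(r * t)))).fun_pow (n + 1)).fun_neg.congr_deriv ?_
    simp only [id, Nat.add_sub_cancel, exp_split, exp_pow, mul_pow]
    push_cast
    ring
  rw [intervalIntegral.integral_eq_sub_of_hasDerivAt (fun x _ ↦ hasDerivAt_antideriv x)
    (by apply Continuous.intervalIntegrable; fun_prop)]
  simp

theorem expMeasure_conv_expMaxMeasure_Iic_of_nonneg (hr : 0 < r) (n : ℕ) {t : ℝ} (ht : 0 ≤ t) :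
    (expMeasure ((n + 1) * r) ∗ expMaxMeasure r n) (Iic t) =
      ENNReal.ofReal ((1 - Real.exp (-(r * t))) ^ (n + 1)) := by
  have := isProbabilityMeasure_expMaxMeasure hr n
  let density (x : ℝ) :=
    (n + 1) * r * Real.exp (-((n + 1) * r * x)) * (1 - Real.exp (-(r * (t - x)))) ^ n
  have density_nonneg : ∀ x ∈ Icc 0 t, 0 ≤ density x := by
    intro x hx
    have : Real.exp (-(r * (t - x))) ≤ 1 :=
      Real.exp_le_one_iff.mpr (neg_nonpos.mpr (mul_nonneg hr.le (sub_nonneg.mpr hx.2)))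
    have : 0 ≤ 1 - Real.exp (-(r * (t - x))) := sub_nonneg.mpr this
    positivity
  have integrableOn_density : IntegrableOn density (Icc 0 t) :=
    Continuous.integrableOn_Icc (by fun_prop)
  calc (expMeasure ((n + 1) * r) ∗ expMaxMeasure r n) (Iic t)
    _ = ∫⁻ x, exponentialPDF ((n + 1) * r) x * expMaxMeasure r n (Iic (t - x)) := by
      rw [conv_Iic]
      exact lintegral_gammaMeasure 1 ((n + 1) * r) _
    _ = ∫⁻ x in Icc 0 t, ENNReal.ofReal (density x) := by
      rw [← lintegral_indicator measurableSet_Icc]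
      refine lintegral_congr fun x ↦ ?_
      rcases lt_or_ge x 0 with hx | hx
      · simp [exponentialPDF_of_neg hx, hx]
      rcases lt_or_ge t x with hxt | hxt
      · simp [expMaxMeasure_Iic_of_neg hr n (sub_neg.mpr hxt), hxt]
      · rw [exponentialPDF_of_nonneg hx, expMaxMeasure_Iic_of_nonneg hr n (sub_nonneg.mpr hxt),
          ← ENNReal.ofReal_mul (by positivity), indicator_of_mem (mem_Icc.mpr ⟨hx, hxt⟩)]
    _ = ENNReal.ofReal (∫ x in 0..t, density x) := by
      rw [intervalIntegral.integral_of_le ht, ← integral_Icc_eq_integral_Ioc,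
        ofReal_integral_eq_lintegral_ofReal integrableOn_density
          (ae_restrict_of_forall_mem measurableSet_Icc density_nonneg)]
    _ = ENNReal.ofReal ((1 - Real.exp (-(r * t))) ^ (n + 1)) := by
      rw [integral_exp_mul_one_sub_exp_pow]

theorem expMaxMeasure_succ (hr : 0 < r) (n : ℕ) :
    expMaxMeasure r (n + 1) = expMeasure ((n + 1) * r) ∗ expMaxMeasure r n := by
  have := isProbabilityMeasure_expMaxMeasure hr n
  have := isProbabilityMeasure_expMaxMeasure hr (n + 1)
  refine Measure.ext_of_Iic _ _ fun t ↦ ?_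
  rcases lt_or_ge t 0 with ht | ht
  · rw [expMaxMeasure_Iic_of_neg hr _ ht, conv_Iic]
    refine (lintegral_eq_zero_of_ae_eq_zero ?_).symm
    filter_upwards [ae_nonneg_gammaMeasure 1 ((n + 1) * r)] with x hx
    exact expMaxMeasure_Iic_of_neg hr n (by linarith)
  · rw [expMaxMeasure_Iic_of_nonneg hr _ ht, expMeasure_conv_expMaxMeasure_Iic_of_nonneg hr n ht]

theorem memLp_id_expMaxMeasure (hr : 0 < r) (n : ℕ) : MemLp id 2 (expMaxMeasure r n) := by
  induction n with
  | zero =>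
    rw [expMaxMeasure_zero]
    exact (memLp_const 0).ae_eq (by simp [Filter.EventuallyEq, ae_dirac_eq])
  | succ n ih =>
    have hr' : 0 < (n + 1) * r := by positivity
    have := isProbabilityMeasure_expMeasure hr'
    have := isProbabilityMeasure_expMaxMeasure hr n
    rw [expMaxMeasure_succ hr]
    exact memLp_id_conv (memLp_id_expMeasure hr') ih

theorem integral_id_expMaxMeasure (hr : 0 < r) (n : ℕ) :
    ∫ x, x ∂expMaxMeasure r n = ∑ i ∈ Finset.range n, 1 / ((i + 1) * r) := by
  induction n with
  | zero => simp [expMaxMeasure_zero]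
  | succ n ih =>
    have hr' : 0 < (n + 1) * r := by positivity
    have := isProbabilityMeasure_expMeasure hr'
    have := isProbabilityMeasure_expMaxMeasure hr n
    rw [expMaxMeasure_succ hr, integral_id_conv
      ((memLp_id_expMeasure hr').integrable one_le_two)
      ((memLp_id_expMaxMeasure hr n).integrable one_le_two), ih, integral_id_expMeasure hr',
      Finset.sum_range_succ, add_comm]

theorem variance_id_expMaxMeasure (hr : 0 < r) (n : ℕ) :
    Var[id; expMaxMeasure r n] = ∑ i ∈ Finset.range n, 1 / ((i + 1) * r) ^ 2 := by
  induction n with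
  | zero => simp [expMaxMeasure_zero]
  | succ n ih =>
    have hr' : 0 < (n + 1) * r := by positivity
    have := isProbabilityMeasure_expMeasure hr'
    have := isProbabilityMeasure_expMaxMeasure hr n
    rw [expMaxMeasure_succ hr, variance_id_conv (memLp_id_expMeasure hr')
      (memLp_id_expMaxMeasure hr n), ih, variance_id_expMeasure hr', Finset.sum_range_succ,
      add_comm]

theorem integral_sq_expMaxMeasure (hr : 0 < r) (n : ℕ) :
    ∫ x, x ^ 2 ∂expMaxMeasure r n =
      ∑ i ∈ Finset.range n, 1 / ((i + 1) * r) ^ 2 +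
        (∑ i ∈ Finset.range n, 1 / ((i + 1) * r)) ^ 2 := by
  have := isProbabilityMeasure_expMaxMeasure hr n
  rw [← variance_id_expMaxMeasure hr, ← integral_id_expMaxMeasure hr,
    variance_eq_sub (memLp_id_expMaxMeasure hr n)]
  simp

end ExponentialMaximum

section SimplexMaximum

variable {n : ℕ}

theorem ae_mem_stdSimplex_simplexUniform (n : ℕ) :
    ∀ᵐ x ∂simplexUniform n, x ∈ stdSimplex ℝ (Fin n) :=
  Measure.ae_smul_measure (ae_restrict_mem (isClosed_stdSimplex ℝ (Fin n)).measurableSet) _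

theorem memLp_iSup_simplexUniform (hn : 0 < n) (p : ℝ≥0∞) :
    MemLp (fun x : Fin n → ℝ ↦ ⨆ i, x i) p (simplexUniform n) := by
  have := isProbabilityMeasure_simplexUniform hn
  refine .of_bound measurable_iSup_apply.aestronglyMeasurable 1 ?_
  filter_upwards [ae_mem_stdSimplex_simplexUniform n] with x hx
  rw [Real.norm_of_nonneg (Real.iSup_nonneg hx.1)]
  exact Real.iSup_le (fun i ↦ (mem_Icc_of_mem_stdSimplex hx i).2) zero_le_one

theorem integral_pow_gammaMeasure_mul_integral_iSup_pow (hn : 0 < n) {r : ℝ} (hr : 0 < r) (k : ℕ) :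
    (∫ s, s ^ k ∂gammaMeasure n r) * ∫ x, (⨆ i, x i) ^ k ∂simplexUniform n =
      ∫ x, x ^ k ∂expMaxMeasure r n := by
  have homogeneous (s : ℝ) (hs : 0 ≤ s) (x : Fin n → ℝ) :
      (⨆ i, (s • x) i) ^ k = s ^ k * (⨆ i, x i) ^ k := by
    rw [← mul_pow, Real.mul_iSup_of_nonneg hs]
    rfl
  rw [expMaxMeasure, integral_map measurable_iSup_apply.aemeasurable (by fun_prop),
    integral_pi_expMeasure_of_homogeneous hn hr (measurable_iSup_apply.pow_const k) homogeneous]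

theorem natCast_mul_integral_iSup_simplexUniform (hn : 0 < n) :
    n * ∫ x, ⨆ i, x i ∂simplexUniform n = ∑ i ∈ Finset.range n, (1 : ℝ) / (i + 1) := by
  have := integral_pow_gammaMeasure_mul_integral_iSup_pow hn one_pos 1
  simpa [integral_id_gammaMeasure, hn, integral_id_expMaxMeasure] using this

theorem natCast_mul_succ_mul_integral_iSup_sq_simplexUniform (hn : 0 < n) :
    n * (n + 1) * ∫ x, (⨆ i, x i) ^ 2 ∂simplexUniform n =
      ∑ i ∈ Finset.range n, (1 : ℝ) / (i + 1) ^ 2 +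
        (∑ i ∈ Finset.range n, (1 : ℝ) / (i + 1)) ^ 2 := by
  have := integral_pow_gammaMeasure_mul_integral_iSup_pow hn one_pos 2
  simpa [integral_sq_gammaMeasure, hn, integral_sq_expMaxMeasure] using this

end SimplexMaximum

/-- If `X` is uniform on the unit simplex in `ℝ^n`, then
`n² · Var(max_i X_i) = (n H_2(n) - H_1(n)²)/(n+1)`. -/
theorem stmt_5 (n : ℕ) (hn : 0 < n) :
    (n : ℝ) ^ 2 * variance (fun x => ⨆ i, x i) (simplexUniform n)
      = ((n : ℝ) * ∑ i ∈ Finset.range n, (1 : ℝ) / (i + 1) ^ 2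
          - (∑ i ∈ Finset.range n, (1 : ℝ) / (i + 1)) ^ 2) / (n + 1) := by
  have := isProbabilityMeasure_simplexUniform hn
  have first_moment := natCast_mul_integral_iSup_simplexUniform hn
  have second_moment := natCast_mul_succ_mul_integral_iSup_sq_simplexUniform hn
  rw [variance_eq_sub (memLp_iSup_simplexUniform hn 2)]
  simp only [Pi.pow_apply]
  rw [eq_div_iff (by positivity)]
  linear_combination n * second_moment + (n + 1) * (-(n * ∫ x, ⨆ i, x i ∂simplexUniform n) -
    ∑ i ∈ Finset.range n, (1 : ℝ) / (i + 1)) * first_moment
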